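/- For every complex number s with s ≠ 1 and ζ(s) ≠ 0, one has −ζ'(s)/ζ(s) = 1/(s−1) − B − (1/2)·log π + (1/2)·Γ'(s/2+1)/Γ(s/2+1) − Σ_ρ m_ρ·(1/(s−ρ) + 1/ρ), where B = log(2√π) − 1 − γ/2 with γ the Euler–Mascheroni constant, the sum runs over all nontrivial zeros ρ of ζ, m_ρ is the order of vanishing of ζ at ρ, and the sum converges absolutely. -/

import Mathlib

open Complex Real

/-- The set of nontrivial zeros of the Riemann zeta function. -/
def nontrivialZetaZeros : Set ℂ :=
  {ρ : ℂ | riemannZeta ρ = 0 ∧ 0 < ρ.re ∧ ρ.re < 1}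

/-- The order of vanishing of `ζ` at `ρ`: the least `m` such that the `m`-th derivative of
`ζ` does not vanish at `ρ`. -/
noncomputable def zetaZeroOrder (ρ : ℂ) : ℕ :=
  sInf {m : ℕ | iteratedDeriv m riemannZeta ρ ≠ 0}

/-- The constant `B = log(2√π) − 1 − γ/2`, with `γ` the Euler–Mascheroni constant. -/
noncomputable def hadamardB : ℝ :=
  Real.log (2 * Real.sqrt Real.pi) - 1 - Real.eulerMascheroniConstant / 2


/-- Division of an entire function by its zero at `a`. -/
lemma hz_divide_one {G : ℂ → ℂ} (hG : Differentiable ℂ G) {a : ℂ} (ha : a ≠ 0)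
    (hord : analyticOrderAt G a ≠ ⊤) :
    ∃ g : ℂ → ℂ, Differentiable ℂ g ∧ g a ≠ 0 ∧
      ∀ z, G z = (1 - z / a) ^ (analyticOrderNatAt G a) * g z := by
  obtain ⟨g, hg, hga, hgG⟩ := ((hG.analyticAt a).analyticOrderAt_ne_top).1 hord
  set n := analyticOrderNatAt G a with hn
  have hne : ∀ z, z ≠ a → 1 - z / a ≠ 0 := by
    intro z hz h
    apply hz
    field_simp at h
    rw [mul_zero] at h
    exact (sub_eq_zero.1 h).symm
  have key : ∀ z : ℂ, (z - a) ^ n = (1 - z / a) ^ n * (-a) ^ n := by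
    intro z
    rw [← mul_pow]
    congr 1
    field_simp
    ring
  let q : ℂ → ℂ := Function.update (fun z => G z / (1 - z / a) ^ n) a ((-a) ^ n * g a)
  have hq1 : q =ᶠ[nhds a] fun z => (-a) ^ n * g z := by
    filter_upwards [hgG] with z hz
    by_cases h : z = a
    · subst h; simp [q]
    · simp only [q, Function.update_of_ne h]
      have := hne z h
      rw [hz, smul_eq_mul, key]
      field_simp
  refine ⟨q, ?_, ?_, ?_⟩
  · intro z
    by_cases h : z = a
    · subst h
      exact (hg.differentiableAt.const_mul _).congr_of_eventuallyEq hq1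
    · have h1 : q =ᶠ[nhds z] fun z => G z / (1 - z / a) ^ n := by
        filter_upwards [isOpen_ne.mem_nhds h] with w hw
        simp [q, Function.update_of_ne hw]
      refine DifferentiableAt.congr_of_eventuallyEq ?_ h1
      refine (hG z).div ?_ (pow_ne_zero _ (hne z h))
      fun_prop
  · simp only [q, Function.update_self]
    exact mul_ne_zero (pow_ne_zero _ (neg_ne_zero.2 ha)) hga
  · intro z
    by_cases h : z = a
    · subst h
      have := hgG.self_of_nhds
      simp only [q, Function.update_self]
      rw [this]
      simp only [smul_eq_mul]
      rw [key]; ring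
    · have := hne z h
      simp only [q, Function.update_of_ne h]
      field_simp

lemma hz_order_ne_top {F : ℂ → ℂ} (hF : Differentiable ℂ F) (h0 : F 0 ≠ 0) (a : ℂ) :
    analyticOrderAt F a ≠ ⊤ := by
  intro h
  rw [analyticOrderAt_eq_top] at h
  have h1 : AnalyticOnNhd ℂ F Set.univ := fun z _ => hF.analyticAt z
  have := h1.eqOn_zero_of_preconnected_of_eventuallyEq_zero isPreconnected_univ
    (Set.mem_univ a) h
  exact h0 (this (Set.mem_univ 0))

lemma hz_divide_finset {F : ℂ → ℂ} (hF : Differentiable ℂ F) (h0 : F 0 ≠ 0) (S : Finset ℂ)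
    (hS : ∀ a ∈ S, a ≠ 0) :
    ∃ g : ℂ → ℂ, Differentiable ℂ g ∧ (∀ a ∈ S, g a ≠ 0) ∧
      ∀ z, F z = (∏ a ∈ S, (1 - z / a) ^ (analyticOrderNatAt F a)) * g z := by
  classical
  induction S using Finset.induction_on with
  | empty => exact ⟨F, hF, by simp, by simp⟩
  | insert b S hb ih =>
    obtain ⟨g, hg, hgS, hFg⟩ := ih (fun a ha => hS a (Finset.mem_insert_of_mem ha))
    have hb0 : b ≠ 0 := hS b (Finset.mem_insert_self _ _)
    have hg0 : g 0 ≠ 0 := by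
      intro h; apply h0; rw [hFg, h, mul_zero]
    obtain ⟨q, hq, hqb, hgq⟩ := hz_divide_one hg hb0 (hz_order_ne_top hg hg0 b)
    have hord : analyticOrderNatAt F b = analyticOrderNatAt g b := by
      have h1 : F = (fun z => ∏ a ∈ S, (1 - z / a) ^ (analyticOrderNatAt F a)) • g := by
        funext z; simp [hFg z]
      have h2 : AnalyticAt ℂ (fun z => ∏ a ∈ S, (1 - z / a) ^ (analyticOrderNatAt F a)) b := by
        apply Differentiable.analyticAt
        fun_prop
      have h3 : analyticOrderAt (fun z => ∏ a ∈ S, (1 - z / a) ^ (analyticOrderNatAt F a)) b = 0 := by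
        rw [h2.analyticOrderAt_eq_zero]
        rw [Finset.prod_ne_zero_iff]
        intro a ha
        apply pow_ne_zero
        have := hS a (Finset.mem_insert_of_mem ha)
        intro h
        field_simp at h
        rw [mul_zero] at h
        exact hb ((sub_eq_zero.1 h) ▸ ha)
      have h4 := analyticOrderAt_smul h2 (hg.analyticAt b)
      rw [← h1, h3, zero_add] at h4
      simp [analyticOrderNatAt, h4]
    refine ⟨q, hq, ?_, ?_⟩
    · intro a ha
      rcases Finset.mem_insert.1 ha with rfl | ha
      · exact hqb
      · intro h
        apply hgS a ha
        rw [hgq, h, mul_zero]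
    · intro z
      rw [Finset.prod_insert hb, hFg, hgq z, hord]
      ring

lemma hz_finite_zeros {F : ℂ → ℂ} (hF : Differentiable ℂ F) (h0 : F 0 ≠ 0) (R : ℝ) :
    {a : ℂ | F a = 0 ∧ ‖a‖ ≤ R}.Finite := by
  by_contra h
  have hinf : {a : ℂ | F a = 0 ∧ ‖a‖ ≤ R}.Infinite := h
  obtain ⟨x, -, hx⟩ := hinf.exists_accPt_of_subset_isCompact (isCompact_closedBall (0 : ℂ) R)
    (fun a ha => by simpa using ha.2)
  have h1 : AnalyticOnNhd ℂ F Set.univ := fun z _ => hF.analyticAt z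
  have h2 : ∃ᶠ z in nhdsWithin x {x}ᶜ, F z = 0 := by
    rw [accPt_iff_frequently_nhdsNE] at hx
    exact hx.mono fun z hz => hz.1
  exact h0 (h1.eqOn_zero_of_preconnected_of_frequently_eq_zero isPreconnected_univ
    (Set.mem_univ x) h2 (Set.mem_univ 0))


/-- Cauchy and Borel–Carathéodory: the logarithmic derivative of a nonvanishing function. -/
lemma hz_logDeriv_bound {g : ℂ → ℂ} (hg : Differentiable ℂ g) (hg0 : g 0 = 1) {R M : ℝ}
    (hR : 0 < R) (hM : 0 < M) (hgne : ∀ z, ‖z‖ < R → g z ≠ 0)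
    (hgM : ∀ z, ‖z‖ < R → ‖g z‖ ≤ Real.exp M) {z : ℂ} (hz : ‖z‖ < R / 4) :
    ‖logDeriv g z - logDeriv g 0‖ ≤ 128 * M / R ^ 2 * ‖z‖ := by
  have hL : DifferentiableOn ℂ (logDeriv g) (Metric.ball 0 R) := by
    intro w hw
    have hw' : ‖w‖ < R := by simpa using hw
    have h1 : DifferentiableAt ℂ (deriv g) w := (hg.analyticAt w).deriv.differentiableAt
    exact (h1.div (hg w) (hgne w hw')).differentiableWithinAt
  obtain ⟨h, hh0, hh⟩ := hL.isExactOn_ball.with_val_at 0 0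
  have hhd : DifferentiableOn ℂ h (Metric.ball 0 R) :=
    fun w hw => (hh w hw).differentiableAt.differentiableWithinAt
  have hexp : ∀ w ∈ Metric.ball (0 : ℂ) R, g w * Complex.exp (-h w) = 1 := by
    intro w hw
    have hder : ∀ x ∈ Metric.ball (0 : ℂ) R,
        HasDerivWithinAt (fun w => g w * Complex.exp (-h w)) 0 (Metric.ball 0 R) x := by
      intro x hx
      have hgx : g x ≠ 0 := hgne x (by simpa using hx)
      have h1 := (hg x).hasDerivAt.mul ((hh x hx).neg.cexp)
      refine (h1.congr_deriv ?_).hasDerivWithinAt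
      rw [logDeriv_apply]
      field_simp
      simp
    have h2 := (convex_ball (0 : ℂ) R).norm_image_sub_le_of_norm_hasDerivWithin_le
      (C := 0) hder (by simp) (Metric.mem_ball_self hR) hw
    have h3 : g w * Complex.exp (-h w) - g 0 * Complex.exp (-h 0) = 0 := by
      simpa using h2
    rw [hg0, hh0] at h3
    simpa [sub_eq_zero] using h3
  have hre : Set.MapsTo h (Metric.ball 0 R) {z | z.re ≤ M} := by
    intro w hw
    have hw' : ‖w‖ < R := by simpa using hw
    have h1 : g w = Complex.exp (h w) := by
      have := hexp w hw
      rw [Complex.exp_neg] at this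
      field_simp at this
      exact this
    have h2 := hgM w hw'
    rw [h1, Complex.norm_exp] at h2
    exact Real.exp_le_exp.1 h2
  have hb : ∀ w, ‖w‖ ≤ R / 2 → ‖h w‖ ≤ 2 * M := by
    intro w hw
    have := Complex.borelCaratheodory_zero hM hhd hre hR (z := w)
      (by simp; linarith) hh0
    refine this.trans ?_
    rw [div_le_iff₀ (by linarith)]
    gcongr
    linarith
  have hb1 : ∀ w, ‖w‖ ≤ 3 * R / 8 → ‖logDeriv g w‖ ≤ 16 * M / R := by
    intro w hw
    have hwb : w ∈ Metric.ball (0 : ℂ) R := by simp; linarith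
    rw [← (hh w hwb).deriv]
    have hsub : Metric.closedBall w (R / 8) ⊆ Metric.closedBall 0 (R / 2) := by
      apply Metric.closedBall_subset_closedBall'
      rw [dist_zero_right]; linarith
    have := Complex.norm_deriv_le_of_forall_mem_sphere_norm_le (c := w) (R := R / 8) (C := 2 * M)
      (f := h) (by linarith) ?_ ?_
    · refine this.trans (le_of_eq ?_)
      field_simp
      norm_num
    · apply DifferentiableOn.diffContOnCl
      refine hhd.mono ?_
      refine Metric.closure_ball_subset_closedBall.trans (hsub.trans ?_)
      exact Metric.closedBall_subset_ball (by linarith)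
    · intro x hx
      apply hb
      simpa using hsub (Metric.sphere_subset_closedBall hx)
  have hb2 : ∀ w ∈ Metric.ball (0 : ℂ) (R / 4), ‖deriv (logDeriv g) w‖ ≤ 128 * M / R ^ 2 := by
    intro w hw
    have hw' : ‖w‖ < R / 4 := by simpa using hw
    have hsub : Metric.closedBall w (R / 8) ⊆ Metric.closedBall 0 (3 * R / 8) := by
      apply Metric.closedBall_subset_closedBall'
      rw [dist_zero_right]; linarith
    have := Complex.norm_deriv_le_of_forall_mem_sphere_norm_le (c := w) (R := R / 8)
      (C := 16 * M / R) (f := logDeriv g) (by linarith) ?_ ?_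
    · refine this.trans (le_of_eq ?_)
      field_simp
      norm_num
    · apply DifferentiableOn.diffContOnCl
      refine hL.mono ?_
      refine Metric.closure_ball_subset_closedBall.trans (hsub.trans ?_)
      exact Metric.closedBall_subset_ball (by linarith)
    · intro x hx
      apply hb1
      simpa using hsub (Metric.sphere_subset_closedBall hx)
  have := (convex_ball (0 : ℂ) (R / 4)).norm_image_sub_le_of_norm_deriv_le
    (f := logDeriv g) (x := 0) (y := z) (fun x hx => ?_) hb2 (by simp [hR]) (by simpa using hz)
  · simpa using this
  · have : ‖x‖ < R / 4 := by simpa using hx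
    exact hL.differentiableAt (Metric.isOpen_ball.mem_nhds (by simp; linarith))

lemma hz_key {F : ℂ → ℂ} (hF : Differentiable ℂ F) (hF0 : F 0 = 1) {R M : ℝ} (hR : 0 < R)
    (hM : 0 < M) (hFM : ∀ z, ‖z‖ ≤ 4 * R → ‖F z‖ ≤ Real.exp M) (S : Finset ℂ)
    (hS : ∀ a, a ∈ S ↔ F a = 0 ∧ ‖a‖ ≤ R) :
    ((∑ a ∈ S, analyticOrderNatAt F a : ℕ) : ℝ) ≤ M ∧
    ∀ z, ‖z‖ < R / 4 → F z ≠ 0 →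
      ‖logDeriv F z - logDeriv F 0 -
        ∑ a ∈ S, (analyticOrderNatAt F a : ℂ) * (1 / (z - a) + 1 / a)‖ ≤
          128 * M / R ^ 2 * ‖z‖ := by
  have hF0' : F 0 ≠ 0 := by rw [hF0]; exact one_ne_zero
  have hS0 : ∀ a ∈ S, a ≠ 0 := by
    rintro a ha rfl
    exact hF0' ((hS 0).1 ha).1
  obtain ⟨g, hg, hgS, hFg⟩ := hz_divide_finset hF hF0' S hS0
  set n := fun a => analyticOrderNatAt F a with hn
  set N : ℕ := ∑ a ∈ S, n a with hN
  have hg0 : g 0 = 1 := by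
    have := hFg 0
    simpa [hF0] using this.symm
  have hbound : ∀ z, ‖z‖ ≤ 4 * R → ‖g z‖ ≤ Real.exp M / 3 ^ N := by
    intro z hz
    have hfr : ∀ w ∈ frontier (Metric.ball (0 : ℂ) (4 * R)), ‖g w‖ ≤ Real.exp M / 3 ^ N := by
      intro w hw
      rw [frontier_ball _ (by positivity)] at hw
      have hw' : ‖w‖ = 4 * R := by simpa using hw
      have h1 := hFM w hw'.le
      rw [hFg w, norm_mul, norm_prod] at h1
      have h2 : (3 : ℝ) ^ N ≤ ∏ a ∈ S, ‖(1 - w / a) ^ n a‖ := by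
        rw [hN, ← Finset.prod_pow_eq_pow_sum]
        apply Finset.prod_le_prod
        · intros; positivity
        · intro a ha
          rw [norm_pow]
          gcongr
          have ha0 := hS0 a ha
          have haR := ((hS a).1 ha).2
          have hapos : 0 < ‖a‖ := norm_pos_iff.2 ha0
          have h3 : (4 : ℝ) ≤ ‖w / a‖ := by
            rw [norm_div, le_div_iff₀ hapos, hw']; linarith
          have h4 := norm_sub_norm_le (w / a) 1
          rw [norm_sub_rev, norm_one] at h4
          linarith
      rw [le_div_iff₀ (by positivity), mul_comm]
      refine le_trans ?_ h1
      gcongr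
    apply Complex.norm_le_of_forall_mem_frontier_norm_le Metric.isBounded_ball
      hg.diffContOnCl hfr
    rw [closure_ball _ (by positivity)]
    simpa using hz
  constructor
  · have h1 := hbound 0 (by simp; positivity)
    rw [hg0, norm_one, le_div_iff₀ (by positivity), one_mul] at h1
    have h2 : Real.exp (N : ℝ) ≤ 3 ^ N := by
      rw [← Real.exp_one_pow]
      gcongr
      linarith [Real.exp_one_lt_d9]
    exact Real.exp_le_exp.1 (h2.trans h1)
  · intro z hz hFz
    have hgne : ∀ w, ‖w‖ < R → g w ≠ 0 := by
      intro w hw h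
      by_cases hwS : w ∈ S
      · exact hgS w hwS h
      · apply hwS
        rw [hS]
        exact ⟨by rw [hFg, h, mul_zero], hw.le⟩
    have hgM : ∀ w, ‖w‖ < R → ‖g w‖ ≤ Real.exp M := by
      intro w hw
      refine (hbound w (by linarith)).trans ?_
      apply div_le_self (by positivity)
      exact one_le_pow₀ (by norm_num)
    have hmain := hz_logDeriv_bound hg hg0 hR hM hgne hgM hz
    have hlog : ∀ w, F w ≠ 0 → logDeriv F w =
        (∑ a ∈ S, (n a : ℂ) * (1 / (w - a))) + logDeriv g w := by
      intro w hw
      have hFe : F = fun z => (∏ a ∈ S, (1 - z / a) ^ (n a)) * g z := funext hFg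
      have hw2 := hw
      rw [hFg w] at hw2
      have hp := left_ne_zero_of_mul hw2
      have hgw := right_ne_zero_of_mul hw2
      have hne : ∀ a ∈ S, (1 - w / a) ≠ 0 := by
        intro a ha h
        have ha0 := hS0 a ha
        field_simp at h
        rw [mul_zero, sub_eq_zero] at h
        exact hw (h ▸ ((hS a).1 ha).1)
      conv_lhs => rw [hFe]
      rw [logDeriv_mul w hp hgw (by fun_prop) (hg w)]
      congr 1
      rw [logDeriv_prod (f := fun a z => (1 - z / a) ^ n a)
        (fun a ha => pow_ne_zero _ (hne a ha)) (fun a ha => by fun_prop)]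
      refine Finset.sum_congr rfl fun a ha => ?_
      rw [logDeriv_fun_pow (f := fun z => 1 - z / a) (by fun_prop)]
      congr 1
      have ha0 := hS0 a ha
      have h1 := hne a ha
      have h2 : w - a ≠ 0 := by
        intro h
        apply h1
        rw [sub_eq_zero] at h
        rw [h, div_self ha0, sub_self]
      have h3 : deriv (fun z => 1 - z / a) w = - (1 / a) := by
        simp
      rw [logDeriv_apply, h3, div_eq_div_iff h1 h2]
      field_simp
      ring
    rw [hlog z hFz, hlog 0 hF0']
    have : (∑ a ∈ S, (n a : ℂ) * (1 / (z - a))) + logDeriv g z -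
        ((∑ a ∈ S, (n a : ℂ) * (1 / (0 - a))) + logDeriv g 0) -
        ∑ a ∈ S, (n a : ℂ) * (1 / (z - a) + 1 / a) = logDeriv g z - logDeriv g 0 := by
      have : ∑ a ∈ S, (n a : ℂ) * (1 / (z - a) + 1 / a) =
          (∑ a ∈ S, (n a : ℂ) * (1 / (z - a))) - (∑ a ∈ S, (n a : ℂ) * (1 / (0 - a))) := by
        rw [← Finset.sum_sub_distrib]
        refine Finset.sum_congr rfl fun a ha => ?_
        rw [zero_sub, ← mul_sub, one_div_neg_eq_neg_one_div]; ring
      rw [this]; ring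
    rw [this]
    exact hmain


lemma hz_rpow_pow (j : ℕ) : ((2 : ℝ) ^ j) ^ (3 / 2 : ℝ) = ((2 : ℝ) ^ (3 / 2 : ℝ)) ^ j := by
  rw [← Real.rpow_natCast, ← Real.rpow_mul (by norm_num), ← Real.rpow_natCast,
    ← Real.rpow_mul (by norm_num), mul_comm]

/-- Summability of `m_ρ / (1 + |ρ|)^2`. -/
lemma hz_summable_sq {F : ℂ → ℂ} (hF : Differentiable ℂ F) (hF0 : F 0 = 1) {K : ℝ} (hK : 0 < K)
    (hFK : ∀ R : ℝ, 1 ≤ R → ∀ z, ‖z‖ ≤ 4 * R → ‖F z‖ ≤ Real.exp (K * R ^ (3 / 2 : ℝ))) :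
    Summable (fun a : {a : ℂ | F a = 0} =>
      (analyticOrderNatAt F (a : ℂ) : ℝ) / (1 + ‖(a : ℂ)‖) ^ 2) := by
  classical
  have hF0' : F 0 ≠ 0 := by rw [hF0]; exact one_ne_zero
  have hcount : ∀ R : ℝ, 1 ≤ R → ∀ T : Finset {a : ℂ | F a = 0}, (∀ a ∈ T, ‖(a : ℂ)‖ ≤ R) →
      ∑ a ∈ T, (analyticOrderNatAt F (a : ℂ) : ℝ) ≤ K * R ^ (3 / 2 : ℝ) := by
    intro R hR T hT
    have hfin := hz_finite_zeros hF hF0' R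
    have h1 := (hz_key hF hF0 (by linarith) (by positivity) (hFK R hR) hfin.toFinset
      (by simp)).1
    push_cast at h1
    refine le_trans ?_ h1
    have hmap := Finset.sum_map T (Function.Embedding.subtype (· ∈ {a : ℂ | F a = 0}))
      (fun a => (analyticOrderNatAt F (a : ℂ) : ℝ))
    refine le_trans (le_of_eq hmap.symm) ?_
    apply Finset.sum_le_sum_of_subset_of_nonneg
    · intro a ha
      rw [Finset.mem_map] at ha
      obtain ⟨b, hb, rfl⟩ := ha
      simp only [Set.Finite.mem_toFinset]
      exact ⟨b.2, hT b hb⟩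
    · intros; positivity
  have hk : ∀ a : {a : ℂ | F a = 0}, ∃ k : ℕ, ‖(a : ℂ)‖ ≤ 2 ^ k ∧
      (2 : ℝ) ^ k ≤ 2 * (1 + ‖(a : ℂ)‖) := by
    intro a
    have hex : ∃ k : ℕ, ‖(a : ℂ)‖ ≤ 2 ^ k := by
      obtain ⟨k, hk⟩ := pow_unbounded_of_one_lt ‖(a : ℂ)‖ (by norm_num : (1 : ℝ) < 2)
      exact ⟨k, hk.le⟩
    refine ⟨Nat.find hex, Nat.find_spec hex, ?_⟩
    rcases h : Nat.find hex with _ | m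
    · simp; linarith [norm_nonneg (a : ℂ)]
    · have := Nat.find_min hex (m := m) (by omega)
      push Not at this
      rw [pow_succ]
      linarith
  choose k hk1 hk2 using hk
  set q : ℝ := (2 : ℝ) ^ (3 / 2 : ℝ) / 4 with hq
  have hq0 : 0 ≤ q := by positivity
  have hq1 : q < 1 := by
    rw [hq, div_lt_one (by norm_num)]
    calc (2 : ℝ) ^ (3 / 2 : ℝ) < (2 : ℝ) ^ (2 : ℝ) :=
          Real.rpow_lt_rpow_of_exponent_lt (by norm_num) (by norm_num)
      _ = 4 := by norm_num
  have hsum : Summable (fun j : ℕ => 4 * K * q ^ j) :=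
    (summable_geometric_of_lt_one hq0 hq1).mul_left _
  apply summable_of_sum_le (c := ∑' j : ℕ, 4 * K * q ^ j)
  · intro a; positivity
  · intro T
    rw [← Finset.sum_fiberwise_of_maps_to (t := T.image k)
      (fun a ha => Finset.mem_image_of_mem k ha)]
    refine le_trans (Finset.sum_le_sum (g := fun j => 4 * K * q ^ j) fun j _ => ?_)
      (hsum.sum_le_tsum _ fun _ _ => by positivity)
    have h1 := hcount (2 ^ j) (one_le_pow₀ (by norm_num)) (T.filter (fun a => k a = j)) (by
      intro a ha
      rw [Finset.mem_filter] at ha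
      rw [← ha.2]; exact hk1 a)
    calc ∑ a ∈ T with k a = j, (analyticOrderNatAt F (a : ℂ) : ℝ) / (1 + ‖(a : ℂ)‖) ^ 2
        ≤ ∑ a ∈ T with k a = j, (analyticOrderNatAt F (a : ℂ) : ℝ) * (4 / 4 ^ j) := by
          refine Finset.sum_le_sum fun a ha => ?_
          rw [Finset.mem_filter] at ha
          rw [div_eq_mul_inv]
          gcongr
          have h2 := hk2 a
          rw [ha.2] at h2
          rw [inv_eq_one_div, div_le_div_iff₀ (by positivity) (by positivity), one_mul]
          calc (4 : ℝ) ^ j = (2 ^ j) ^ 2 := by rw [← pow_mul, mul_comm, pow_mul]; norm_num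
            _ ≤ (2 * (1 + ‖(a : ℂ)‖)) ^ 2 := by gcongr
            _ = _ := by ring
      _ = (∑ a ∈ T with k a = j, (analyticOrderNatAt F (a : ℂ) : ℝ)) * (4 / 4 ^ j) := by
          rw [Finset.sum_mul]
      _ ≤ (K * (2 ^ j) ^ (3 / 2 : ℝ)) * (4 / 4 ^ j) := by gcongr
      _ = 4 * K * q ^ j := by
          rw [hz_rpow_pow, hq, div_pow]; ring

lemma hz_summable {F : ℂ → ℂ} (hF : Differentiable ℂ F) (hF0 : F 0 = 1) {K : ℝ} (hK : 0 < K)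
    (hFK : ∀ R : ℝ, 1 ≤ R → ∀ z, ‖z‖ ≤ 4 * R → ‖F z‖ ≤ Real.exp (K * R ^ (3 / 2 : ℝ))) (z : ℂ) :
    Summable (fun a : {a : ℂ | F a = 0} =>
      ‖(analyticOrderNatAt F (a : ℂ) : ℂ) * (1 / (z - (a : ℂ)) + 1 / (a : ℂ))‖) := by
  have hF0' : F 0 ≠ 0 := by rw [hF0]; exact one_ne_zero
  have hs := (hz_summable_sq hF hF0 hK hFK).mul_left (8 * ‖z‖)
  refine hs.of_norm_bounded_eventually ?_
  have hfin : {a : {a : ℂ | F a = 0} | ‖(a : ℂ)‖ ≤ 2 * ‖z‖ + 1}.Finite := by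
    apply Set.Finite.of_finite_image (f := Subtype.val) _ Subtype.val_injective.injOn
    refine (hz_finite_zeros hF hF0' (2 * ‖z‖ + 1)).subset ?_
    rintro _ ⟨b, hb, rfl⟩
    exact ⟨b.2, hb⟩
  refine hfin.subset ?_
  intro a ha
  by_contra hlt
  apply ha
  simp only [Set.mem_ofPred_eq, not_le] at hlt
  have hzn := norm_nonneg z
  have ha0 : (a : ℂ) ≠ 0 := norm_pos_iff.1 (by linarith)
  have h1 : ‖(a : ℂ)‖ / 2 ≤ ‖z - (a : ℂ)‖ := by
    have := norm_sub_norm_le (a : ℂ) z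
    rw [norm_sub_rev] at this
    linarith
  have h2 : z - (a : ℂ) ≠ 0 := norm_pos_iff.1 (by linarith)
  have h3 : 1 / (z - (a : ℂ)) + 1 / (a : ℂ) = z / ((z - a) * a) := by
    field_simp; ring
  change ‖‖(analyticOrderNatAt F (a : ℂ) : ℂ) * (1 / (z - (a : ℂ)) + 1 / (a : ℂ))‖‖ ≤
    8 * ‖z‖ * ((analyticOrderNatAt F (a : ℂ) : ℝ) / (1 + ‖(a : ℂ)‖) ^ 2)
  rw [norm_norm, norm_mul, h3, norm_div, norm_mul, Complex.norm_natCast]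
  have hapos : 0 < ‖(a : ℂ)‖ := norm_pos_iff.2 ha0
  calc (analyticOrderNatAt F (a : ℂ) : ℝ) * (‖z‖ / (‖z - (a : ℂ)‖ * ‖(a : ℂ)‖))
      ≤ (analyticOrderNatAt F (a : ℂ) : ℝ) * (‖z‖ / (‖(a : ℂ)‖ / 2 * ‖(a : ℂ)‖)) := by gcongr
    _ ≤ (analyticOrderNatAt F (a : ℂ) : ℝ) * (‖z‖ / ((1 + ‖(a : ℂ)‖) ^ 2 / 8)) := by
        gcongr
        nlinarith
    _ = _ := by field_simp

/-- Hadamard's partial fraction expansion for entire functions of order at most `3/2`. -/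
theorem hz_hadamard {F : ℂ → ℂ} (hF : Differentiable ℂ F) (hF0 : F 0 = 1) {K : ℝ} (hK : 0 < K)
    (hFK : ∀ R : ℝ, 1 ≤ R → ∀ z, ‖z‖ ≤ 4 * R → ‖F z‖ ≤ Real.exp (K * R ^ (3 / 2 : ℝ))) (z : ℂ)
    (hz : F z ≠ 0) :
    logDeriv F z = logDeriv F 0 + ∑' a : {a : ℂ | F a = 0},
      (analyticOrderNatAt F (a : ℂ) : ℂ) * (1 / (z - (a : ℂ)) + 1 / (a : ℂ)) := by
  classical
  have hF0' : F 0 ≠ 0 := by rw [hF0]; exact one_ne_zero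
  have hsum := (hz_summable hF hF0 hK hFK z).of_norm.hasSum
  let S : ℕ → Finset ℂ := fun k => (hz_finite_zeros hF hF0' k).toFinset
  have hSmem : ∀ k a, a ∈ S k ↔ F a = 0 ∧ ‖a‖ ≤ k := by
    intro k a; simp [S]
  let T : ℕ → Finset {a : ℂ | F a = 0} := fun k => (S k).subtype (fun a => a ∈ {a : ℂ | F a = 0})
  have hT : Filter.Tendsto T Filter.atTop Filter.atTop := by
    apply Filter.tendsto_atTop_finset_of_monotone
    · intro i j hij a ha
      simp only [T, Finset.mem_subtype, hSmem] at ha ⊢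
      exact ⟨ha.1, ha.2.trans (by exact_mod_cast hij)⟩
    · intro a
      obtain ⟨k, hk⟩ := exists_nat_ge ‖(a : ℂ)‖
      refine ⟨k, ?_⟩
      simp only [T, Finset.mem_subtype, hSmem]
      exact ⟨a.2, hk⟩
  have hlim1 := hsum.comp hT
  have hTS : ∀ k, ∑ a ∈ T k, (analyticOrderNatAt F (a : ℂ) : ℂ) * (1 / (z - (a : ℂ)) + 1 / (a : ℂ))
      = ∑ a ∈ S k, (analyticOrderNatAt F a : ℂ) * (1 / (z - a) + 1 / a) := by
    intro k
    exact Finset.sum_subtype_of_mem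
      (fun a => (analyticOrderNatAt F a : ℂ) * (1 / (z - a) + 1 / a))
      (fun a ha => ((hSmem k a).1 ha).1)
  have hlim2 : Filter.Tendsto (fun k : ℕ => logDeriv F z - logDeriv F 0 -
      ∑ a ∈ S k, (analyticOrderNatAt F a : ℂ) * (1 / (z - a) + 1 / a)) Filter.atTop (nhds 0) := by
    have hz0 : Filter.Tendsto (fun k : ℕ => 128 * K * ‖z‖ * (k : ℝ) ^ (-(1 / 2) : ℝ))
        Filter.atTop (nhds 0) := by
      have := ((tendsto_rpow_neg_atTop (by norm_num : (0 : ℝ) < 1 / 2)).comp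
        tendsto_natCast_atTop_atTop).const_mul (128 * K * ‖z‖)
      simpa using this
    refine squeeze_zero_norm' ?_ hz0
    obtain ⟨k0, hk0⟩ := exists_nat_gt (4 * ‖z‖)
    filter_upwards [Filter.eventually_ge_atTop (max k0 1)] with k hk
    have hk1 : (1 : ℝ) ≤ k := by exact_mod_cast (le_max_right _ _).trans hk
    have hk2 : (k0 : ℝ) ≤ k := by exact_mod_cast (le_max_left _ _).trans hk
    have hkpos : (0 : ℝ) < k := by linarith
    have := (hz_key hF hF0 hkpos (by positivity) (hFK k hk1) (S k) (hSmem k)).2 z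
      (by linarith) hz
    refine this.trans (le_of_eq ?_)
    have h1 : (k : ℝ) ^ (3 / 2 : ℝ) = (k : ℝ) ^ (-(1 / 2) : ℝ) * (k : ℝ) ^ 2 := by
      rw [← Real.rpow_natCast (k : ℝ) 2, ← Real.rpow_add hkpos]
      norm_num
    rw [h1]
    field_simp
  have hlim3 : Filter.Tendsto (fun k : ℕ => logDeriv F z - logDeriv F 0 -
      ∑ a ∈ S k, (analyticOrderNatAt F a : ℂ) * (1 / (z - a) + 1 / a)) Filter.atTop
      (nhds (logDeriv F z - logDeriv F 0 - ∑' a : {a : ℂ | F a = 0},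
      (analyticOrderNatAt F (a : ℂ) : ℂ) * (1 / (z - (a : ℂ)) + 1 / (a : ℂ)))) := by
    refine Filter.Tendsto.sub tendsto_const_nhds ?_
    refine hlim1.congr fun k => ?_
    exact hTS k
  have := tendsto_nhds_unique hlim3 hlim2
  linear_combination this


open HurwitzZeta in
lemma hz_kernel_ge_one {t : ℝ} (ht : 0 < t) : 1 ≤ evenKernel 0 t := by
  have h := hasSum_int_evenKernel₀ 0 ht
  have h1 := h.nonneg (fun n => by split_ifs <;> positivity)
  simp at h1
  exact h1

open HurwitzZeta in
lemma hz_f_modif_nonneg (t : ℝ) (ht : 0 < t) :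
    ∃ φ : ℝ, 0 ≤ φ ∧ (hurwitzEvenFEPair 0).f_modif t = (φ : ℂ) := by
  unfold WeakFEPair.f_modif
  rcases lt_trichotomy t 1 with h | h | h
  · refine ⟨evenKernel 0 t - t ^ (-(1 / 2) : ℝ), ?_, ?_⟩
    · have h1 := evenKernel_functional_equation 0 t
      rw [← evenKernel_eq_cosKernel_of_zero] at h1
      have h2 := hz_kernel_ge_one (t := 1 / t) (by positivity)
      rw [h1, Real.rpow_neg ht.le, one_div (t ^ (1 / 2 : ℝ))]
      have h3 : 0 ≤ (t ^ (1 / 2 : ℝ))⁻¹ := by positivity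
      nlinarith
    · have h1 : t ∉ Set.Ioi (1 : ℝ) := by simp [h.le]
      have h2 : t ∈ Set.Ioo (0 : ℝ) 1 := ⟨ht, h⟩
      simp [h1, h2, hurwitzEvenFEPair]
  · refine ⟨0, le_rfl, ?_⟩
    subst h
    simp
  · refine ⟨evenKernel 0 t - 1, ?_, ?_⟩
    · linarith [hz_kernel_ge_one ht]
    · have h1 : t ∈ Set.Ioi (1 : ℝ) := h
      have h2 : t ∉ Set.Ioo (0 : ℝ) 1 := by simp [h.le]
      simp [h1, h2, hurwitzEvenFEPair]

lemma hz_norm_completed_le (s : ℂ) :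
    ‖completedRiemannZeta₀ s‖ ≤ ‖completedRiemannZeta₀ (s.re : ℂ)‖ := by
  unfold completedRiemannZeta₀ HurwitzZeta.completedHurwitzZetaEven₀ WeakFEPair.Λ₀
  rw [norm_div, norm_div]
  gcongr
  unfold mellin
  set f := (HurwitzZeta.hurwitzEvenFEPair 0).f_modif with hf
  have hre : ∫ t in Set.Ioi (0 : ℝ), ((t : ℝ) : ℂ) ^ ((s.re : ℂ) / 2 - 1) • f t =
      ((∫ t in Set.Ioi (0 : ℝ), ‖((t : ℝ) : ℂ) ^ (s / 2 - 1) • f t‖ : ℝ) : ℂ) := by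
    rw [← integral_complex_ofReal]
    refine MeasureTheory.setIntegral_congr_fun measurableSet_Ioi fun t ht => ?_
    have ht' : (0 : ℝ) < t := ht
    obtain ⟨φ, hφ, hφt⟩ := hz_f_modif_nonneg t ht'
    simp only [hf, hφt, smul_eq_mul, norm_mul, Complex.norm_real, Real.norm_eq_abs,
      abs_of_nonneg hφ, Complex.norm_cpow_eq_rpow_re_of_pos ht']
    rw [ofReal_mul, ofReal_cpow ht'.le]
    congr 2
    simp
  rw [hre, Complex.norm_real]
  exact (MeasureTheory.norm_integral_le_integral_norm _).trans (le_abs_self _)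

lemma hz_gamma_bound {σ R : ℝ} (hσ : 2 ≤ σ) (hR : σ ≤ R) :
    Real.Gamma (σ / 2) ≤ Real.exp (2 * R ^ (3 / 2 : ℝ)) := by
  set x := σ / 2 with hx
  have hx1 : 1 ≤ x := by rw [hx]; linarith
  set n := ⌈x⌉₊ with hn
  have hn1 : x ≤ n := Nat.le_ceil x
  have hn2 : (n : ℝ) < x + 1 := Nat.ceil_lt_add_one (by linarith)
  have hnpos : (0 : ℝ) < n := by linarith
  have hΓ : 0 < Real.Gamma x := Real.Gamma_pos_of_pos (by linarith)
  calc Real.Gamma x ≤ x * Real.Gamma x := by nlinarith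
    _ = Real.Gamma (x + 1) := (Real.Gamma_add_one (by linarith)).symm
    _ ≤ Real.Gamma (n + 1) :=
        Real.Gamma_strictMonoOn_Ici.monotoneOn (by simp; linarith) (by simp; linarith)
          (by linarith)
    _ = (n.factorial : ℝ) := Real.Gamma_nat_eq_factorial n
    _ ≤ (n : ℝ) ^ n := by exact_mod_cast Nat.factorial_le_pow n
    _ = Real.exp (n * Real.log n) := by
        rw [← Real.rpow_natCast (n : ℝ) n, Real.rpow_def_of_pos hnpos, mul_comm]
    _ ≤ Real.exp (2 * R ^ (3 / 2 : ℝ)) := by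
        apply Real.exp_le_exp.2
        have h1 := Real.log_le_rpow_div hnpos.le (by norm_num : (0 : ℝ) < 1 / 2)
        have h2 : (n : ℝ) * (n : ℝ) ^ (1 / 2 : ℝ) = (n : ℝ) ^ (3 / 2 : ℝ) := by
          rw [← Real.rpow_one_add' hnpos.le (by norm_num)]; norm_num
        have h3 : (n : ℝ) ^ (3 / 2 : ℝ) ≤ R ^ (3 / 2 : ℝ) := by
          apply Real.rpow_le_rpow hnpos.le _ (by norm_num)
          linarith
        calc (n : ℝ) * Real.log n ≤ n * ((n : ℝ) ^ (1 / 2 : ℝ) / (1 / 2)) := by gcongr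
          _ = 2 * ((n : ℝ) * (n : ℝ) ^ (1 / 2 : ℝ)) := by ring
          _ ≤ _ := by rw [h2]; linarith

lemma hz_zeta_bound : ∃ Z : ℝ, 0 ≤ Z ∧ ∀ σ : ℝ, 2 ≤ σ → ‖riemannZeta (σ : ℂ)‖ ≤ Z := by
  have hs2 : Summable (fun n : ℕ => 1 / ((n : ℝ) + 1) ^ 2) := by
    have := (summable_nat_add_iff 1).2 (Real.summable_one_div_nat_pow.2 (by norm_num : 1 < 2))
    simpa using this
  refine ⟨∑' n : ℕ, 1 / ((n : ℝ) + 1) ^ 2, tsum_nonneg fun n => by positivity, ?_⟩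
  intro σ hσ
  rw [zeta_eq_tsum_one_div_nat_add_one_cpow (by simp; linarith)]
  apply tsum_of_norm_bounded hs2.hasSum
  intro n
  have hn : (0 : ℝ) < (n : ℝ) + 1 := by positivity
  have h1 : ((n : ℂ) + 1) = (((n : ℝ) + 1 : ℝ) : ℂ) := by push_cast; rfl
  rw [norm_div, norm_one, h1, Complex.norm_cpow_eq_rpow_re_of_pos hn]
  gcongr
  rw [ofReal_re, ← Real.rpow_natCast]
  apply Real.rpow_le_rpow_of_exponent_le (by linarith [Nat.cast_nonneg (α := ℝ) n])
  exact_mod_cast hσ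

/-- The entire function `s (s - 1) Λ(s)`. -/
noncomputable def hzXi (s : ℂ) : ℂ := s * (s - 1) * completedRiemannZeta₀ s + 1

lemma hzXi_differentiable : Differentiable ℂ hzXi := by
  unfold hzXi
  have := differentiable_completedZeta₀
  fun_prop

lemma hzXi_one_sub (s : ℂ) : hzXi (1 - s) = hzXi s := by
  unfold hzXi
  rw [completedRiemannZeta₀_one_sub]; ring

lemma hzXi_eq {s : ℂ} (h0 : s ≠ 0) (h1 : s ≠ 1) : hzXi s = s * (s - 1) * completedRiemannZeta s := by
  unfold hzXi
  rw [completedRiemannZeta_eq]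
  have : 1 - s ≠ 0 := sub_ne_zero.2 h1.symm
  field_simp
  ring

lemma hzXi_growth_right : ∃ K : ℝ, 0 < K ∧ ∀ R : ℝ, 1 ≤ R → ∀ s : ℂ, ‖s‖ ≤ R → 1 / 2 ≤ s.re →
    ‖hzXi s‖ ≤ Real.exp (K * R ^ (3 / 2 : ℝ)) := by
  obtain ⟨Z, hZ0, hZ⟩ := hz_zeta_bound
  obtain ⟨K0, hK0⟩ := (isCompact_closedBall (0 : ℂ) 2).exists_bound_of_continuousOn
    differentiable_completedZeta₀.continuous.continuousOn
  have hK0nn : 0 ≤ K0 := (norm_nonneg _).trans (hK0 0 (by simp))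
  refine ⟨K0 + Z + 3 + 4, by positivity, ?_⟩
  intro R hR s hs hsre
  have hreR : s.re ≤ R := (Complex.re_le_norm s).trans hs
  set P := R ^ (3 / 2 : ℝ) with hP
  have hRP : R ≤ P := by
    calc R = R ^ (1 : ℝ) := (Real.rpow_one R).symm
      _ ≤ P := Real.rpow_le_rpow_of_exponent_le hR (by norm_num)
  set E := Real.exp P with hE
  have hE1 : R + 1 ≤ E := by linarith [Real.add_one_le_exp P]
  have hE2 : Real.exp (2 * P) = E ^ 2 := by rw [hE, ← Real.exp_nat_mul]; norm_num
  have hE4 : Real.exp (4 * P) = E ^ 4 := by rw [hE, ← Real.exp_nat_mul]; norm_num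
  have hΛ : ‖completedRiemannZeta₀ s‖ ≤ (K0 + Z + 2) * E ^ 2 := by
    refine (hz_norm_completed_le s).trans ?_
    have hEsq : 1 ≤ E ^ 2 := one_le_pow₀ (by linarith)
    by_cases h2 : s.re ≤ 2
    · have := hK0 (s.re : ℂ) (by
        simp only [Metric.mem_closedBall, dist_zero_right, Complex.norm_real, Real.norm_eq_abs]
        rw [abs_of_nonneg (by linarith)]; exact h2)
      nlinarith
    · push Not at h2
      have hne0 : (s.re : ℂ) ≠ 0 := by
        rw [Ne, ofReal_eq_zero]; linarith
      have hre0 : (0 : ℝ) < s.re := by linarith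
      have hG : Gammaℝ (s.re : ℂ) ≠ 0 := Gammaℝ_ne_zero_of_re_pos (by simpa using hre0)
      have h3 := riemannZeta_def_of_ne_zero hne0
      have h4 : completedRiemannZeta₀ (s.re : ℂ) = riemannZeta (s.re : ℂ) * Gammaℝ (s.re : ℂ)
          + 1 / (s.re : ℂ) + 1 / (1 - (s.re : ℂ)) := by
        rw [h3, div_mul_cancel₀ _ hG, completedRiemannZeta_eq]; ring
      have hGb : ‖Gammaℝ (s.re : ℂ)‖ ≤ E ^ 2 := by
        rw [Gammaℝ_def, norm_mul, Complex.norm_cpow_eq_rpow_re_of_pos Real.pi_pos]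
        have e1 : Complex.Gamma ((s.re : ℂ) / 2) = (Real.Gamma (s.re / 2) : ℂ) := by
          rw [← Complex.Gamma_ofReal]; push_cast; rfl
        rw [e1, Complex.norm_real, Real.norm_eq_abs,
          abs_of_pos (Real.Gamma_pos_of_pos (by linarith))]
        have e2 : π ^ (-(s.re : ℂ) / 2).re ≤ 1 := by
          apply Real.rpow_le_one_of_one_le_of_nonpos (by linarith [Real.pi_gt_three])
          have : (-(s.re : ℂ) / 2) = ((-s.re / 2 : ℝ) : ℂ) := by push_cast; rfl
          rw [this, ofReal_re]; linarith
        have e3 := hz_gamma_bound h2.le hreR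
        rw [← hP, hE2] at e3
        have e4 : 0 < Real.Gamma (s.re / 2) := Real.Gamma_pos_of_pos (by linarith)
        have e5 : 0 < π ^ (-(s.re : ℂ) / 2).re := Real.rpow_pos_of_pos Real.pi_pos _
        nlinarith
      have hz1 : ‖(1 : ℂ) / (s.re : ℂ)‖ ≤ 1 := by
        rw [norm_div, norm_one, Complex.norm_real, Real.norm_eq_abs, abs_of_pos hre0]
        rw [div_le_one hre0]; linarith
      have hz2 : ‖(1 : ℂ) / (1 - (s.re : ℂ))‖ ≤ 1 := by
        have : (1 - (s.re : ℂ)) = ((1 - s.re : ℝ) : ℂ) := by push_cast; rfl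
        rw [this, norm_div, norm_one, Complex.norm_real, Real.norm_eq_abs,
          abs_of_neg (by linarith)]
        rw [div_le_one (by linarith)]; linarith
      have hzz := hZ s.re h2.le
      rw [h4]
      refine (norm_add₃_le).trans ?_
      rw [norm_mul]
      have : ‖riemannZeta (s.re : ℂ)‖ * ‖Gammaℝ (s.re : ℂ)‖ ≤ Z * E ^ 2 := by gcongr
      nlinarith
  have hEpos : 0 < E := by positivity
  have hs1 : ‖s - 1‖ ≤ E := by
    refine (norm_sub_le _ _).trans ?_
    rw [norm_one]; linarith
  have hs0 : ‖s‖ ≤ E := by linarith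
  have hE4' : 1 ≤ E ^ 4 := one_le_pow₀ (by linarith)
  calc ‖hzXi s‖ ≤ ‖s‖ * ‖s - 1‖ * ‖completedRiemannZeta₀ s‖ + 1 := by
        unfold hzXi
        refine (norm_add_le _ _).trans ?_
        rw [norm_mul, norm_mul, norm_one]
    _ ≤ E * E * ((K0 + Z + 2) * E ^ 2) + 1 := by gcongr
    _ ≤ (K0 + Z + 3) * E ^ 4 := by nlinarith
    _ ≤ Real.exp ((K0 + Z + 3) * P) * Real.exp (4 * P) := by
        rw [hE4]
        gcongr
        have h1 := Real.add_one_le_exp ((K0 + Z + 3) * P)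
        nlinarith
    _ = _ := by rw [← Real.exp_add]; ring_nf

lemma hzXi_growth : ∃ K : ℝ, 0 < K ∧ ∀ R : ℝ, 1 ≤ R → ∀ s : ℂ, ‖s‖ ≤ 4 * R →
    ‖hzXi s‖ ≤ Real.exp (K * R ^ (3 / 2 : ℝ)) := by
  obtain ⟨K, hK, h⟩ := hzXi_growth_right
  refine ⟨K * 5 ^ (3 / 2 : ℝ), by positivity, ?_⟩
  intro R hR s hs
  rw [mul_assoc, ← Real.mul_rpow (by norm_num) (by linarith)]
  by_cases h2 : 1 / 2 ≤ s.re
  · exact h (5 * R) (by linarith) s (by linarith) h2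
  · rw [← hzXi_one_sub]
    apply h (5 * R) (by linarith)
    · refine (norm_sub_le _ _).trans ?_
      rw [norm_one]; linarith
    · simp only [sub_re, one_re]; linarith

lemma hzXi_zero : hzXi 0 = 1 := by simp [hzXi]

lemma hzXi_at_one : hzXi 1 = 1 := by simp [hzXi]

lemma hzXi_zero_set : {a : ℂ | hzXi a = 0} = nontrivialZetaZeros := by
  ext ρ
  simp only [Set.mem_ofPred_eq, nontrivialZetaZeros]
  constructor
  · intro h
    have h0 : ρ ≠ 0 := by
      rintro rfl
      rw [hzXi_zero] at h
      exact one_ne_zero h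
    have h1 : ρ ≠ 1 := by
      rintro rfl
      rw [hzXi_at_one] at h
      exact one_ne_zero h
    have hL : completedRiemannZeta ρ = 0 := by
      rw [hzXi_eq h0 h1] at h
      have := sub_ne_zero.mpr h1
      simpa [h0, this] using h
    have hz : riemannZeta ρ = 0 := by
      rw [riemannZeta_def_of_ne_zero h0, hL, zero_div]
    have hz' : riemannZeta (1 - ρ) = 0 := by
      rw [riemannZeta_def_of_ne_zero (sub_ne_zero.mpr h1.symm), completedRiemannZeta_one_sub, hL,
        zero_div]
    refine ⟨hz, ?_, ?_⟩
    · by_contra hc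
      exact riemannZeta_ne_zero_of_one_le_re (s := 1 - ρ) (by simp; linarith) hz'
    · by_contra hc
      exact riemannZeta_ne_zero_of_one_le_re (s := ρ) (by linarith) hz
  · rintro ⟨hz, hp, hl⟩
    have h0 : ρ ≠ 0 := by
      rintro rfl
      simp at hp
    have h1 : ρ ≠ 1 := by
      rintro rfl
      simp at hl
    rw [riemannZeta_def_of_ne_zero h0, div_eq_zero_iff] at hz
    rw [hzXi_eq h0 h1, hz.resolve_right (Gammaℝ_ne_zero_of_re_pos hp), mul_zero]

/-- The factor relating `hzXi` to `riemannZeta`. -/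
noncomputable def hzG (z : ℂ) : ℂ :=
  (z - 1) * ((π : ℂ) ^ (-z / 2) * (2 * Complex.Gamma (z / 2 + 1)))

lemma hzXi_eq_hzG {z : ℂ} (h1 : z ≠ 1) (hG : Complex.Gamma (z / 2 + 1) ≠ 0) :
    hzXi z = hzG z * riemannZeta z := by
  have hpi : (π : ℂ) ^ (-z / 2) ≠ 0 := by
    rw [Complex.cpow_ne_zero_iff]
    left
    exact_mod_cast Real.pi_ne_zero
  have h2 : 1 - z ≠ 0 := sub_ne_zero.mpr h1.symm
  rw [riemannZeta_eq_mul_completedRiemannZeta₀, hzG, hzXi]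
  generalize Complex.Gamma (z / 2 + 1) = g at *
  generalize (π : ℂ) ^ (-z / 2) = p at *
  field_simp
  ring

lemma hzGamma_differentiableAt {z : ℂ} (hz : ∀ m : ℕ, z / 2 + 1 ≠ -m) :
    DifferentiableAt ℂ (fun z : ℂ => Complex.Gamma (z / 2 + 1)) z := by
  have := Complex.differentiableAt_Gamma _ hz
  exact DifferentiableAt.comp (f := fun z : ℂ => z / 2 + 1) z this (by fun_prop)

lemma hzCpow_differentiable : Differentiable ℂ (fun z : ℂ => (π : ℂ) ^ (-z / 2)) := by
  intro z
  refine DifferentiableAt.const_cpow (by fun_prop) (Or.inl ?_)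
  exact_mod_cast Real.pi_ne_zero

lemma hzXi_eventually {z : ℂ} (h1 : z ≠ 1) (hz : ∀ m : ℕ, z / 2 + 1 ≠ -m) :
    hzXi =ᶠ[nhds z] (hzG * riemannZeta) := by
  have hG := Complex.Gamma_ne_zero hz
  have hc := (hzGamma_differentiableAt hz).continuousAt.eventually_ne hG
  filter_upwards [hc, eventually_ne_nhds h1] with w hw hw1
  exact hzXi_eq_hzG hw1 hw

lemma hzG_ne_zero {z : ℂ} (h1 : z ≠ 1) (hz : ∀ m : ℕ, z / 2 + 1 ≠ -m) : hzG z ≠ 0 := by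
  have hG := Complex.Gamma_ne_zero hz
  have hpi : (π : ℂ) ^ (-z / 2) ≠ 0 := by
    rw [Complex.cpow_ne_zero_iff]
    left
    exact_mod_cast Real.pi_ne_zero
  simp [hzG, hG, hpi, sub_ne_zero.mpr h1]

lemma hz_zeta_analyticAt {z : ℂ} (h1 : z ≠ 1) : AnalyticAt ℂ riemannZeta z := by
  rw [Complex.analyticAt_iff_eventually_differentiableAt]
  filter_upwards [eventually_ne_nhds h1] with w hw
  exact differentiableAt_riemannZeta hw

lemma hzG_analyticAt {z : ℂ} (hz : 0 < z.re) : AnalyticAt ℂ hzG z := by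
  rw [Complex.analyticAt_iff_eventually_differentiableAt]
  filter_upwards [(isOpen_lt continuous_const Complex.continuous_re).mem_nhds hz] with w hw
  have hw' : 0 < w.re := hw
  have h1 : DifferentiableAt ℂ (fun z : ℂ => Complex.Gamma (z / 2 + 1)) w := by
    apply hzGamma_differentiableAt
    intro m hm
    have := congrArg Complex.re hm
    simp at this
    have : (0 : ℝ) ≤ m := Nat.cast_nonneg m
    linarith
  have h2 := hzCpow_differentiable w
  unfold hzG
  exact (by fun_prop : DifferentiableAt ℂ (fun z : ℂ => z - 1) w).mul (h2.mul (h1.const_mul 2))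

lemma hz_order_eq {ρ : ℂ} (hρ : ρ ∈ nontrivialZetaZeros) :
    zetaZeroOrder ρ = analyticOrderNatAt hzXi ρ := by
  obtain ⟨_, hp, hl⟩ := hρ
  have h1 : ρ ≠ 1 := by
    rintro rfl
    simp at hl
  have hz : ∀ m : ℕ, ρ / 2 + 1 ≠ -m := by
    intro m hm
    have := congrArg Complex.re hm
    simp at this
    have : (0 : ℝ) ≤ m := Nat.cast_nonneg m
    linarith
  have hζ := hz_zeta_analyticAt h1
  have ho : analyticOrderAt hzXi ρ = analyticOrderAt riemannZeta ρ := by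
    rw [analyticOrderAt_congr (hzXi_eventually h1 hz), analyticOrderAt_mul (hzG_analyticAt hp) hζ,
      (hzG_analyticAt hp).analyticOrderAt_eq_zero.mpr (hzG_ne_zero h1 hz), zero_add]
  have hnt : analyticOrderAt hzXi ρ ≠ ⊤ :=
    hz_order_ne_top hzXi_differentiable (by rw [hzXi_zero]; exact one_ne_zero) ρ
  have hcast : analyticOrderAt riemannZeta ρ = (analyticOrderNatAt hzXi ρ : ℕ) := by
    rw [← ho]
    exact (ENat.natCast_toNat hnt).symm
  obtain ⟨ha, hb⟩ := (analyticOrderAt_eq_nat_iff_iteratedDeriv_eq_zero hζ).mp hcast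
  unfold zetaZeroOrder
  refine IsLeast.csInf_eq ⟨hb, fun m hm => ?_⟩
  by_contra hc
  exact hm (ha m (not_le.mp hc))

lemma hz_shift_ne {s : ℂ} (hζ : riemannZeta s ≠ 0) (m : ℕ) : s / 2 + 1 ≠ -m := by
  intro h
  have : s = -2 * (m + 1) := by linear_combination 2 * h
  rw [this] at hζ
  exact hζ (riemannZeta_neg_two_mul_nat_add_one m)

lemma hz_logDeriv_xi {s : ℂ} (hs : s ≠ 1) (hζ : riemannZeta s ≠ 0) :
    logDeriv hzXi s = 1 / (s - 1) - (1 / 2) * (Real.log Real.pi : ℂ) +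
      (1 / 2) * (deriv Complex.Gamma (s / 2 + 1) / Complex.Gamma (s / 2 + 1)) +
      deriv riemannZeta s / riemannZeta s := by
  have hz := hz_shift_ne hζ
  have hG := Complex.Gamma_ne_zero hz
  have hpi0 : (π : ℂ) ≠ 0 := by exact_mod_cast Real.pi_ne_zero
  have hpi : (π : ℂ) ^ (-s / 2) ≠ 0 := by
    rw [Complex.cpow_ne_zero_iff]
    exact Or.inl hpi0
  have hs1 : s - 1 ≠ 0 := sub_ne_zero.mpr hs
  have d1 : HasDerivAt (fun z : ℂ => z - 1) 1 s := (hasDerivAt_id s).sub_const 1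
  have d2 : HasDerivAt (fun z : ℂ => (π : ℂ) ^ (-z / 2))
      ((π : ℂ) ^ (-s / 2) * Complex.log π * (-1 / 2)) s :=
    HasDerivAt.const_cpow (((hasDerivAt_id s).neg).div_const 2) (Or.inl hpi0)
  have d3 : HasDerivAt (fun z : ℂ => Complex.Gamma (z / 2 + 1))
      (deriv Complex.Gamma (s / 2 + 1) * (1 / 2)) s :=
    HasDerivAt.comp (h := fun z : ℂ => z / 2 + 1) s
      (Complex.differentiableAt_Gamma _ hz).hasDerivAt
      (((hasDerivAt_id s).div_const 2).add_const 1)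
  have d4 := (differentiableAt_riemannZeta hs).hasDerivAt
  have d : HasDerivAt (hzG * riemannZeta) _ s := (d1.mul (d2.mul (d3.const_mul 2))).mul d4
  rw [logDeriv_apply, (hzXi_eventually hs hz).deriv_eq, hzXi_eq_hzG hs hG, d.deriv, hzG,
    Complex.ofReal_log Real.pi_pos.le]
  simp only [Pi.mul_apply]
  clear d d1 d2 d3 d4
  generalize deriv Complex.Gamma (s / 2 + 1) = g' at *
  generalize Complex.Gamma (s / 2 + 1) = g at *
  generalize (π : ℂ) ^ (-s / 2) = p at *
  field_simp
  ring

lemma hz_logDeriv_xi_zero : logDeriv hzXi 0 = (hadamardB : ℂ) := by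
  have d0 : HasDerivAt completedRiemannZeta₀ (deriv completedRiemannZeta₀ 0) 0 :=
    (differentiable_completedZeta₀ 0).hasDerivAt
  have d1 : HasDerivAt (fun z : ℂ => z - 1) 1 (0 : ℂ) := (hasDerivAt_id _).sub_const 1
  have d : HasDerivAt hzXi _ 0 := (((hasDerivAt_id (0 : ℂ)).mul d1).mul d0).add_const 1
  rw [logDeriv_apply, hzXi_zero, d.deriv]
  have hl : Real.log (2 * Real.sqrt Real.pi) = Real.log (4 * Real.pi) / 2 := by
    have : (4 : ℝ) * Real.pi = (2 * Real.sqrt Real.pi) ^ 2 := by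
      rw [mul_pow, Real.sq_sqrt Real.pi_pos.le]
      norm_num
    rw [this, Real.log_pow]
    push_cast
    ring
  have hl2 : Complex.log (4 * π) = ((Real.log (4 * Real.pi) : ℝ) : ℂ) := by
    rw [Complex.ofReal_log (by positivity)]
    push_cast
    rfl
  simp only [Pi.mul_apply, id, completedRiemannZeta₀_zero, hadamardB, hl, hl2]
  push_cast
  ring

lemma hz_transfer (f : ℂ → ℕ → ℂ) :
    ((fun ρ : nontrivialZetaZeros => f ρ (zetaZeroOrder ρ)) =
      fun ρ : nontrivialZetaZeros => f ρ (analyticOrderNatAt hzXi ρ)) := by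
  funext ρ
  rw [hz_order_eq ρ.2]

/-- the partial fraction (Hadamard product) expansion of `ζ'/ζ`:
for `s ≠ 1` with `ζ(s) ≠ 0`,
`-ζ'(s)/ζ(s) = 1/(s-1) - B - (1/2)·log π + (1/2)·Γ'(s/2+1)/Γ(s/2+1)
  - Σ_ρ m_ρ (1/(s-ρ) + 1/ρ)`, the sum over nontrivial zeros converging absolutely. -/
theorem hadamard_expansion_zeta_log_deriv (s : ℂ) (hs : s ≠ 1) (hζ : riemannZeta s ≠ 0) :
    Summable (fun ρ : nontrivialZetaZeros =>
      ‖(zetaZeroOrder ρ : ℂ) * (1 / (s - (ρ : ℂ)) + 1 / (ρ : ℂ))‖) ∧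
    -(deriv riemannZeta s / riemannZeta s) =
      1 / (s - 1) - (hadamardB : ℂ) - (1 / 2) * (Real.log Real.pi : ℂ) +
        (1 / 2) * (deriv Complex.Gamma (s / 2 + 1) / Complex.Gamma (s / 2 + 1)) -
        ∑' ρ : nontrivialZetaZeros,
          (zetaZeroOrder ρ : ℂ) * (1 / (s - (ρ : ℂ)) + 1 / (ρ : ℂ)) := by
  obtain ⟨K, hK, hgr⟩ := hzXi_growth
  have hS := hz_summable hzXi_differentiable hzXi_zero hK hgr s
  have hne : hzXi s ≠ 0 := by
    have hz := hz_shift_ne hζ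
    rw [hzXi_eq_hzG hs (Complex.Gamma_ne_zero hz)]
    exact mul_ne_zero (hzG_ne_zero hs hz) hζ
  have hH := hz_hadamard hzXi_differentiable hzXi_zero hK hgr s hne
  rw [hzXi_zero_set] at hS hH
  rw [hz_logDeriv_xi hs hζ, hz_logDeriv_xi_zero] at hH
  have hfun : (fun ρ : nontrivialZetaZeros =>
      (zetaZeroOrder ρ : ℂ) * (1 / (s - (ρ : ℂ)) + 1 / (ρ : ℂ))) =
      fun ρ : nontrivialZetaZeros =>
        (analyticOrderNatAt hzXi ρ : ℂ) * (1 / (s - (ρ : ℂ)) + 1 / (ρ : ℂ)) :=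
    hz_transfer (fun ρ n => (n : ℂ) * (1 / (s - ρ) + 1 / ρ))
  constructor
  · have := congrArg (fun g : nontrivialZetaZeros → ℂ => fun ρ => ‖g ρ‖) hfun
    rw [this]
    exact hS
  · rw [hfun]
    linear_combination -hH
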